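/- Consider the squared loss ℓ(p, y) = Σ_{j=1}^d (p_j − (e_y)_j)^2 on Δ_d. Given outcomes y_1,…,y_T ∈ {1,…,d}, let the Follow-The-Leader predictions be p_1 ∈ Δ_d arbitrary and p_t = (1/(t−1)) Σ_{s=1}^{t−1} e_{y_s} for 2 ≤ t ≤ T. Then for every p ∈ Δ_d, Σ_{t=1}^T [ℓ(p_t, y_t) − ℓ(p, y_t)] ≤ 4(1 + log T). -/

import Mathlib

/-!
For the squared distance in an inner product space the leader after `n` rounds is the mean of the
outcomes seen so far. If `x` is the mean of the first `n` outcomes, `z` is the next outcome and `m`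
is the updated mean, Stewart's identity reads
`(n + 1) ‖q - m‖² = n ‖q - x‖² + ‖q - z‖² - n / (n + 1) ‖x - z‖²`. With the potential
`n ‖q - x‖²` the regret therefore telescopes exactly to `∑ ‖x n - z n‖² / (n + 1)` minus the
final potential. The simplex has squared diameter at most `2`, so this is at most twice a
harmonic number.
-/

open scoped BigOperators

/-- The squared loss `ℓ(p, y) = ∑_j (p_j − (e_y)_j)²`. -/
def sqLoss {d : ℕ} (p : Fin d → ℝ) (y : Fin d) : ℝ :=
  ∑ j, (p j - if j = y then 1 else 0) ^ 2

section Leader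

variable {E F : Type*} [AddCommGroup E] [Module ℝ E] [AddCommGroup F] [Module ℝ F]

/-- `IsLeader z n m` says that `m` is a Follow-The-Leader prediction for the squared distance after
the outcomes `z 0, …, z (n - 1)`, that is, their mean. The equation is free of division so that at
`n = 0` every point is a leader, the first prediction being arbitrary. -/
def IsLeader (z : ℕ → E) (n : ℕ) (m : E) : Prop :=
  (n : ℝ) • m = ∑ i ∈ Finset.range n, z i

lemma exists_isLeader (z : ℕ → E) (n : ℕ) : ∃ m, IsLeader z n m := by
  rcases eq_or_ne n 0 with rfl | hn
  · exact ⟨0, by simp [IsLeader]⟩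
  · exact ⟨(n : ℝ)⁻¹ • ∑ i ∈ Finset.range n, z i, smul_inv_smul₀ (Nat.cast_ne_zero.2 hn) _⟩

lemma IsLeader.succ_smul_eq {z : ℕ → E} {n : ℕ} {x m : E}
    (hx : IsLeader z n x) (hm : IsLeader z (n + 1) m) :
    ((n : ℝ) + 1) • m = (n : ℝ) • x + (1 : ℝ) • z n := by
  rw [IsLeader] at hx hm
  rw [hx, one_smul, ← Finset.sum_range_succ, ← hm, Nat.cast_succ]

lemma IsLeader.map (f : E →ₗ[ℝ] F) {z : ℕ → E} {n : ℕ} {m : E} (hm : IsLeader z n m) :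
    IsLeader (fun i => f (z i)) n (f m) := by
  rw [IsLeader, ← map_smul, hm, map_sum]

lemma IsLeader.mem_of_convex {s : Set E} (hs : Convex ℝ s) {z : ℕ → E} (hz : ∀ i, z i ∈ s)
    {n : ℕ} (hn : n ≠ 0) {m : E} (hm : IsLeader z n m) : m ∈ s := by
  have hn' : (n : ℝ) ≠ 0 := Nat.cast_ne_zero.2 hn
  have m_eq : m = ∑ i ∈ Finset.range n, (n : ℝ)⁻¹ • z i := by
    rw [← Finset.smul_sum, ← hm, inv_smul_smul₀ hn']
  rw [m_eq]
  refine hs.sum_mem (fun _ _ => by positivity) ?_ fun i _ => hz i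
  rw [Finset.sum_const, Finset.card_range, nsmul_eq_mul, mul_inv_cancel₀ hn']

lemma isLeader_single_of_eq_card_div {ι : Type*} [DecidableEq ι] {y : ℕ → ι} {n : ℕ} {p : ι → ℝ}
    (hp : n ≠ 0 → ∀ j, p j = (((Finset.range n).filter (fun s => y s = j)).card : ℝ) / n) :
    IsLeader (fun s => Pi.single (y s) (1 : ℝ)) n p := by
  rcases eq_or_ne n 0 with rfl | hn
  · simp [IsLeader]
  ext j
  rw [Pi.smul_apply, hp hn, smul_eq_mul, mul_div_cancel₀ _ (Nat.cast_ne_zero.2 hn),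
    Finset.sum_apply, Finset.natCast_card_filter]
  simp only [Pi.single_apply, eq_comm]

end Leader

section Regret

variable {E : Type*} [NormedAddCommGroup E] [InnerProductSpace ℝ E]

lemma add_mul_norm_sq_eq_of_add_smul_eq {a b : ℝ} (hab : a + b ≠ 0) {u v w : E}
    (hw : (a + b) • w = a • u + b • v) :
    (a + b) * ‖w‖ ^ 2 = a * ‖u‖ ^ 2 + b * ‖v‖ ^ 2 - a * b / (a + b) * ‖u - v‖ ^ 2 := by
  have norm_smul_w : (a + b) ^ 2 * ‖w‖ ^ 2
      = a ^ 2 * ‖u‖ ^ 2 + 2 * (b * (a * inner ℝ u v)) + b ^ 2 * ‖v‖ ^ 2 := by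
    have h := congrArg (fun t => ‖t‖ ^ 2) hw
    simpa only [norm_add_sq_real, norm_smul, mul_pow, Real.norm_eq_abs, sq_abs,
      real_inner_smul_left, real_inner_smul_right] using h
  rw [norm_sub_sq_real]
  field_simp
  linear_combination norm_smul_w

lemma IsLeader.succ_mul_norm_sub_sq_eq {z : ℕ → E} {n : ℕ} {x m : E}
    (hx : IsLeader z n x) (hm : IsLeader z (n + 1) m) (q : E) :
    ((n : ℝ) + 1) * ‖q - m‖ ^ 2
      = n * ‖q - x‖ ^ 2 + ‖q - z n‖ ^ 2 - n / (n + 1) * ‖x - z n‖ ^ 2 := by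
  have hw : ((n : ℝ) + 1) • (q - m) = (n : ℝ) • (q - x) + (1 : ℝ) • (q - z n) := by
    rw [smul_sub, hx.succ_smul_eq hm]
    module
  have h := add_mul_norm_sq_eq_of_add_smul_eq n.cast_add_one_ne_zero hw
  rwa [one_mul, mul_one, sub_sub_sub_cancel_left, norm_sub_rev (z n)] at h

/-- The regret over `T` rounds, for the squared-distance loss, of the predictions `x` against the
fixed prediction `q` when the outcomes are `z`. -/
def sqDistRegret (z x : ℕ → E) (T : ℕ) (q : E) : ℝ :=
  ∑ n ∈ Finset.range T, (‖x n - z n‖ ^ 2 - ‖q - z n‖ ^ 2)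

theorem sqDistRegret_add_mul_norm_sub_sq_eq {z x : ℕ → E} {T : ℕ} (hx : ∀ n < T, IsLeader z n (x n))
    {m : E} (hm : IsLeader z T m) (q : E) :
    sqDistRegret z x T q + T * ‖q - m‖ ^ 2
      = ∑ n ∈ Finset.range T, ‖x n - z n‖ ^ 2 / (n + 1) := by
  induction T generalizing m with
  | zero => simp [sqDistRegret]
  | succ T ih =>
    have hxT : IsLeader z T (x T) := hx T T.lt_succ_self
    have regret_T := ih (fun n hn => hx n (hn.trans T.lt_succ_self)) hxT
    have potential_step := hxT.succ_mul_norm_sub_sq_eq hm q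
    have loss_split : ‖x T - z T‖ ^ 2 - T / (T + 1) * ‖x T - z T‖ ^ 2
        = ‖x T - z T‖ ^ 2 / (T + 1) := by
      field_simp
      ring
    rw [sqDistRegret] at regret_T ⊢
    rw [Finset.sum_range_succ, Finset.sum_range_succ, Nat.cast_succ]
    linear_combination regret_T + potential_step + loss_split

theorem sqDistRegret_le_mul_one_add_log {z x : ℕ → E} {T : ℕ} (hx : ∀ n < T, IsLeader z n (x n))
    {C : ℝ} (hC₀ : 0 ≤ C) (hC : ∀ n < T, ‖x n - z n‖ ^ 2 ≤ C) (q : E) :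
    sqDistRegret z x T q ≤ C * (1 + Real.log T) := by
  obtain ⟨m, hm⟩ := exists_isLeader z T
  calc sqDistRegret z x T q
      ≤ ∑ n ∈ Finset.range T, ‖x n - z n‖ ^ 2 / (n + 1) := by
        rw [← sqDistRegret_add_mul_norm_sub_sq_eq hx hm q]
        exact le_add_of_nonneg_right (by positivity)
    _ ≤ ∑ n ∈ Finset.range T, C / (n + 1) := by
        gcongr with n hn
        exact hC n (Finset.mem_range.1 hn)
    _ = C * (harmonic T : ℝ) := by
        simp [harmonic, Finset.mul_sum, div_eq_mul_inv]
    _ ≤ C * (1 + Real.log T) := by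
        gcongr
        exact harmonic_le_one_add_log T

end Regret

lemma sum_sub_sq_le_two_of_mem_stdSimplex {ι : Type*} [Fintype ι] {p r : ι → ℝ}
    (hp : p ∈ stdSimplex ℝ ι) (hr : r ∈ stdSimplex ℝ ι) : ∑ j, (p j - r j) ^ 2 ≤ 2 := by
  have sq_le_add (j : ι) : (p j - r j) ^ 2 ≤ p j + r j := by
    obtain ⟨hp₀, hp₁⟩ := mem_Icc_of_mem_stdSimplex hp j
    obtain ⟨hr₀, hr₁⟩ := mem_Icc_of_mem_stdSimplex hr j
    nlinarith
  calc ∑ j, (p j - r j) ^ 2 ≤ ∑ j, (p j + r j) := Finset.sum_le_sum fun j _ => sq_le_add j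
    _ = 2 := by rw [Finset.sum_add_distrib, hp.2, hr.2, one_add_one_eq_two]

section SqLoss

variable {d : ℕ}

lemma sqLoss_eq_sum_sub_single_sq (p : Fin d → ℝ) (y : Fin d) :
    sqLoss p y = ∑ j, (p j - (Pi.single y 1 : Fin d → ℝ) j) ^ 2 := by
  simp only [sqLoss, Pi.single_apply]

lemma sqLoss_eq_norm_sub_sq (p : Fin d → ℝ) (y : Fin d) :
    sqLoss p y = ‖WithLp.toLp 2 p - WithLp.toLp 2 (Pi.single y (1 : ℝ))‖ ^ 2 := by
  simp only [sqLoss_eq_sum_sub_single_sq, EuclideanSpace.real_norm_sq_eq, PiLp.sub_apply]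

lemma sqLoss_le_two {p : Fin d → ℝ} (hp : p ∈ stdSimplex ℝ (Fin d)) (y : Fin d) :
    sqLoss p y ≤ 2 := by
  rw [sqLoss_eq_sum_sub_single_sq]
  exact sum_sub_sq_le_two_of_mem_stdSimplex hp (single_mem_stdSimplex ℝ y)

end SqLoss

theorem stmt5_general {d T : ℕ} (y : ℕ → Fin d) (p : ℕ → Fin d → ℝ)
    (hp1 : p 1 ∈ stdSimplex ℝ (Fin d))
    (hpt : ∀ t, 2 ≤ t → t ≤ T → ∀ j : Fin d,
        p t j = (((Finset.range (t - 1)).filter (fun s => y s = j)).card : ℝ) / ((t : ℝ) - 1))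
    (q : Fin d → ℝ) :
    ∑ t ∈ Finset.range T, (sqLoss (p (t + 1)) (y t) - sqLoss q (y t))
      ≤ 2 * (1 + Real.log T) := by
  have leader (n : ℕ) (hn : n < T) :
      IsLeader (fun s => Pi.single (y s) (1 : ℝ)) n (p (n + 1)) :=
    isLeader_single_of_eq_card_div fun hn₀ j => by
      simpa using hpt (n + 1) (by lia) hn j
  have mem_simplex (n : ℕ) (hn : n < T) : p (n + 1) ∈ stdSimplex ℝ (Fin d) := by
    rcases eq_or_ne n 0 with rfl | hn₀
    · exact hp1
    · exact (leader n hn).mem_of_convex (convex_stdSimplex ℝ _)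
        (fun s => single_mem_stdSimplex ℝ (y s)) hn₀
  have loss_le (n : ℕ) (hn : n < T) := sqLoss_le_two (mem_simplex n hn) (y n)
  simp only [sqLoss_eq_norm_sub_sq] at loss_le ⊢
  exact sqDistRegret_le_mul_one_add_log
    (fun n hn => (leader n hn).map (WithLp.linearEquiv 2 ℝ (Fin d → ℝ)).symm.toLinearMap)
    zero_le_two loss_le (WithLp.toLp 2 q)

/-- FTL regret bound for the squared loss (Corollary `squared-loss`).
FTL predictions: `p 1 ∈ Δ_d` arbitrary and `p t = (1/(t−1)) ∑_{s=1}^{t−1} e_{y_s}` for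
`2 ≤ t ≤ T` (1-based rounds; `y s` is the outcome of round `s+1`). -/
theorem stmt5 {d T : ℕ} (y : ℕ → Fin d) (p : ℕ → Fin d → ℝ)
    (hp1 : p 1 ∈ stdSimplex ℝ (Fin d))
    (hpt : ∀ t, 2 ≤ t → t ≤ T → ∀ j : Fin d,
        p t j = (((Finset.range (t - 1)).filter (fun s => y s = j)).card : ℝ) / ((t : ℝ) - 1)) :
    ∀ q ∈ stdSimplex ℝ (Fin d),
      ∑ t ∈ Finset.range T, (sqLoss (p (t + 1)) (y t) - sqLoss q (y t))
        ≤ 4 * (1 + Real.log T) := by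
  intro q _
  linarith [stmt5_general y p hp1 hpt q, Real.log_natCast_nonneg T]
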